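/- Low–mid–high frequency splitting: let g : [0,∞) → [1,∞) be non-decreasing and u a Schwartz function on ℝ² with u, Λ^{r₁}u ∈ L² for some r₁ > 2. Then for every integer N ≥ 1, ‖∇u‖_{L^∞(ℝ²)} ≤ C‖u‖_{L²} + C g²(2^N) √N ‖(Λ²/g²(Λ)) u‖_{L²} + C 2^{N(2−r₁)} ‖Λ^{r₁} u‖_{L²}, with C independent of N, u, g. -/

import Mathlib

open MeasureTheory FourierTransform

/-- The fractional Laplacian `Λ^s` on `ℝ²` (Fourier multiplier `|ξ|^s`). -/
noncomputable def fLap (s : ℝ) (f : EuclideanSpace ℝ (Fin 2) → ℂ) :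
    EuclideanSpace ℝ (Fin 2) → ℂ :=
  𝓕⁻ (fun ξ => ((‖ξ‖ ^ s : ℝ) : ℂ) * 𝓕 f ξ)

/-- The Fourier multiplier `Λ²/g²(Λ)` with symbol `|ξ|²/g(|ξ|)²`. -/
noncomputable def gMultSq (g : ℝ → ℝ) (f : EuclideanSpace ℝ (Fin 2) → ℂ) :
    EuclideanSpace ℝ (Fin 2) → ℂ :=
  𝓕⁻ (fun ξ => ((‖ξ‖ ^ (2:ℝ) / (g ‖ξ‖) ^ 2 : ℝ) : ℂ) * 𝓕 f ξ)

lemma fs_swap (f h : EuclideanSpace ℝ (Fin 2) → ℂ) (hf : Integrable f) (hh : Integrable h) :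
    ∫ ξ, (𝓕⁻ f ξ) • h ξ = ∫ x, f x • (𝓕⁻ h x) := by
  have hfl : (-innerₗ (EuclideanSpace ℝ (Fin 2))).flip = -innerₗ (EuclideanSpace ℝ (Fin 2)) := by
    ext x y
    simp [real_inner_comm]
  have := VectorFourier.integral_fourierIntegral_smul_eq_flip (μ := volume) (ν := volume)
    (L := -innerₗ (EuclideanSpace ℝ (Fin 2)))
    (f := f) (g := h) Real.continuous_fourierChar
    (by simp only [LinearMap.neg_apply, innerₗ_apply_apply]; fun_prop) hf hh
  rw [hfl] at this
  exact this

lemma fs_plancherel (h : EuclideanSpace ℝ (Fin 2) → ℂ) (h1 : Integrable h) (h2 : MemLp h 2) :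
    eLpNorm (𝓕⁻ h) 2 volume = eLpNorm h 2 volume := by
  set F : Lp (α := EuclideanSpace ℝ (Fin 2)) ℂ 2 volume := 𝓕⁻ (h2.toLp h) with hF
  have hn : ‖F‖ = ‖h2.toLp h‖ :=
    (Lp.fourierTransformₗᵢ (EuclideanSpace ℝ (Fin 2)) ℂ).symm.norm_map (h2.toLp h)
  have hc : Continuous (𝓕⁻ h) := by
    refine VectorFourier.fourierIntegral_continuous Real.continuous_fourierChar ?_ h1
    simp only [LinearMap.neg_apply, innerₗ_apply_apply]; fun_prop
  have key : ⇑F =ᵐ[volume] 𝓕⁻ h := by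
    apply ae_eq_of_integral_contDiff_smul_eq
    · exact (Lp.memLp F).locallyIntegrable (by norm_num)
    · exact hc.locallyIntegrable
    · intro g g_smooth g_cpt
      have hg₁ : HasCompactSupport (Complex.ofRealCLM ∘ g) := g_cpt.comp_left rfl
      have hg₂ : ContDiff ℝ ((⊤ : ℕ∞) : WithTop ℕ∞) (Complex.ofRealCLM ∘ g) :=
        Complex.ofRealCLM.contDiff.comp g_smooth
      set φ := hg₁.toSchwartzMap hg₂ with hφ
      have e1 : ∫ x, g x • F x = Lp.toTemperedDistribution F φ := by
        rw [Lp.toTemperedDistribution_apply]; simp [hφ]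
      have e2 : Lp.toTemperedDistribution F φ = ∫ x, (𝓕⁻ φ x) • h x := by
        rw [hF, ← Lp.fourierInv_toTemperedDistribution_eq, TemperedDistribution.fourierInv_apply,
          Lp.toTemperedDistribution_apply]
        apply integral_congr_ae
        filter_upwards [h2.coeFn_toLp] with x hx
        rw [hx]
      rw [e1, e2, SchwartzMap.fourierInv_coe, fs_swap _ _ φ.integrable h1]
      simp [hφ]
  rw [← eLpNorm_congr_ae key, ← eLpNorm_congr_ae h2.coeFn_toLp]
  rw [Lp.norm_def, Lp.norm_def] at hn
  exact (ENNReal.toReal_eq_toReal_iff' (Lp.eLpNorm_ne_top _) (Lp.eLpNorm_ne_top _)).1 hn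

lemma fs_mult (m : EuclideanSpace ℝ (Fin 2) → ℝ) (hm : Measurable m) (k : ℕ)
    (hb : ∀ ξ, |m ξ| ≤ (1 + ‖ξ‖ ^ 2) ^ k) (u : SchwartzMap (EuclideanSpace ℝ (Fin 2)) ℂ) :
    eLpNorm (𝓕⁻ (fun ξ => ((m ξ : ℝ) : ℂ) * 𝓕 (⇑u) ξ)) 2 volume
      = eLpNorm (fun ξ => ((m ξ : ℝ) : ℂ) * 𝓕 (⇑u) ξ) 2 volume := by
  have hg : Function.HasTemperateGrowth
    (fun ξ : EuclideanSpace ℝ (Fin 2) => (1 + ‖ξ‖ ^ 2) ^ k) := by fun_prop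
  set w := SchwartzMap.smulLeftCLM ℂ (fun ξ : EuclideanSpace ℝ (Fin 2) => (1 + ‖ξ‖ ^ 2) ^ k) (𝓕 u)
  have hw : ∀ ξ, ‖w ξ‖ = (1 + ‖ξ‖ ^ 2) ^ k * ‖𝓕 (⇑u) ξ‖ := by
    intro ξ
    simp only [w]
    rw [SchwartzMap.smulLeftCLM_apply_apply hg, norm_smul, Real.norm_of_nonneg (by positivity),
      SchwartzMap.fourier_coe]
  have hle : ∀ ξ, ‖((m ξ : ℝ) : ℂ) * 𝓕 (⇑u) ξ‖ ≤ ‖w ξ‖ := by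
    intro ξ
    rw [hw, norm_mul, Complex.norm_real, Real.norm_eq_abs]
    gcongr
    exact hb ξ
  have hmeas : AEStronglyMeasurable (fun ξ => ((m ξ : ℝ) : ℂ) * 𝓕 (⇑u) ξ) volume := by
    have : Continuous (𝓕 (⇑u)) := by
      rw [← SchwartzMap.fourier_coe]; exact (𝓕 u).continuous
    exact ((Complex.measurable_ofReal.comp hm).mul this.measurable).aestronglyMeasurable
  apply fs_plancherel
  · exact w.integrable.mono hmeas (Filter.Eventually.of_forall hle)
  · exact (w.memLp 2).mono hmeas (Filter.Eventually.of_forall hle)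

lemma fs_grad (u : SchwartzMap (EuclideanSpace ℝ (Fin 2)) ℂ) (x : EuclideanSpace ℝ (Fin 2)) :
    ‖fderiv ℝ (⇑u) x‖ₑ ≤ ENNReal.ofReal (2 * Real.pi) * ∫⁻ ξ, ‖ξ‖ₑ * ‖𝓕 (⇑u) ξ‖ₑ := by
  have hI : Integrable (fun ξ => ‖ξ‖ * ‖𝓕 (⇑u) ξ‖) := by
    have := (𝓕 u).integrable_pow_mul volume 1
    simp only [pow_one, SchwartzMap.fourier_coe] at this
    exact this
  have hreal : ‖fderiv ℝ (⇑u) x‖ ≤ 2 * Real.pi * ∫ ξ, ‖ξ‖ * ‖𝓕 (⇑u) ξ‖ := by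
    refine ContinuousLinearMap.opNorm_le_bound _ (by positivity) fun m => ?_
    have hm : (inner ℝ · m : EuclideanSpace ℝ (Fin 2) → ℝ).HasTemperateGrowth :=
      ((innerSL ℝ).flip m).hasTemperateGrowth
    rw [← SchwartzMap.lineDerivOp_apply_eq_fderiv]
    have e : LineDeriv.lineDerivOp m u = 𝓕⁻ (𝓕 (LineDeriv.lineDerivOp m u)) := by simp
    rw [e, SchwartzMap.fourierInv_coe]
    refine (VectorFourier.norm_fourierIntegral_le_integral_norm _ _ _ _ _).trans ?_
    rw [← integral_const_mul, ← integral_mul_const]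
    refine integral_mono (SchwartzMap.integrable _).norm ((hI.const_mul _).mul_const _) fun ξ => ?_
    rw [SchwartzMap.fourier_lineDerivOp_eq]
    simp only [smul_apply, SchwartzMap.smulLeftCLM_apply_apply hm, norm_smul, norm_mul,
      SchwartzMap.fourier_coe]
    simp only [Complex.norm_ofNat, Complex.norm_real, Complex.norm_I, mul_one,
      Real.norm_of_nonneg Real.pi_pos.le]
    have := norm_inner_le_norm (𝕜 := ℝ) ξ m
    calc _ ≤ 2 * Real.pi * (‖ξ‖ * ‖m‖ * ‖𝓕 (⇑u) ξ‖) := by gcongr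
      _ = _ := by ring
  rw [← ofReal_norm]
  refine (ENNReal.ofReal_le_ofReal hreal).trans ?_
  rw [ENNReal.ofReal_mul (by positivity), ofReal_integral_eq_lintegral_ofReal hI
    (Filter.Eventually.of_forall fun ξ => by positivity)]
  gcongr with ξ
  rw [ENNReal.ofReal_mul (by positivity), ofReal_norm, ofReal_norm]

lemma fs_cs (S : Set (EuclideanSpace ℝ (Fin 2))) (hS : MeasurableSet S)
    (f a : EuclideanSpace ℝ (Fin 2) → ENNReal) (h : EuclideanSpace ℝ (Fin 2) → ℂ)
    (ha : Measurable a) (hh : AEMeasurable h)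
    (hf : ∀ ξ ∈ S, f ξ ≤ a ξ * ‖h ξ‖ₑ) (c : ℝ) (hc : 0 ≤ c)
    (hac : ∫⁻ ξ in S, a ξ ^ 2 ≤ ENNReal.ofReal (c ^ 2)) :
    ∫⁻ ξ in S, f ξ ≤ ENNReal.ofReal c * eLpNorm h 2 volume := by
  calc ∫⁻ ξ in S, f ξ ≤ ∫⁻ ξ in S, (a * fun ξ => ‖h ξ‖ₑ) ξ := setLIntegral_mono' hS hf
    _ ≤ (∫⁻ ξ in S, a ξ ^ (2:ℝ)) ^ (1 / (2:ℝ)) * (∫⁻ ξ in S, ‖h ξ‖ₑ ^ (2:ℝ)) ^ (1 / (2:ℝ)) :=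
      ENNReal.lintegral_mul_le_Lp_mul_Lq _ Real.HolderConjugate.two_two ha.aemeasurable
        hh.enorm.restrict
    _ ≤ (ENNReal.ofReal (c ^ 2)) ^ (1 / (2:ℝ)) * (∫⁻ ξ, ‖h ξ‖ₑ ^ (2:ℝ)) ^ (1 / (2:ℝ)) := by
      gcongr
      · simpa using hac
      · exact Measure.restrict_le_self
    _ = _ := by
      rw [ENNReal.ofReal_rpow_of_nonneg (by positivity) (by norm_num), ← Real.sqrt_eq_rpow,
        Real.sqrt_sq hc, eLpNorm_eq_lintegral_rpow_enorm_toReal (by norm_num) (by norm_num)]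
      simp

lemma fs_annulus (s : ℝ) (hs : 0 ≤ s) (l : ℕ) :
    ∫⁻ ξ in {ξ : EuclideanSpace ℝ (Fin 2) | (2:ℝ) ^ l ≤ ‖ξ‖ ∧ ‖ξ‖ < (2:ℝ) ^ (l + 1)},
      ENNReal.ofReal (‖ξ‖ ^ (-s)) ^ 2
    ≤ ENNReal.ofReal (4 * (volume (Metric.ball (0 : EuclideanSpace ℝ (Fin 2)) 1)).toReal
        * ((2:ℝ) ^ (2 - 2 * s)) ^ l) := by
  have hV : volume (Metric.ball (0 : EuclideanSpace ℝ (Fin 2)) 1) ≠ ⊤ := measure_ball_lt_top.ne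
  have hSm : MeasurableSet {ξ : EuclideanSpace ℝ (Fin 2) | (2:ℝ) ^ l ≤ ‖ξ‖ ∧ ‖ξ‖ < (2:ℝ) ^ (l + 1)} :=
    (measurableSet_le measurable_const measurable_norm).inter
      (measurableSet_lt measurable_norm measurable_const)
  calc _ ≤ ∫⁻ ξ in {ξ : EuclideanSpace ℝ (Fin 2) | (2:ℝ) ^ l ≤ ‖ξ‖ ∧ ‖ξ‖ < (2:ℝ) ^ (l + 1)},
        ENNReal.ofReal (((2:ℝ) ^ l) ^ (-s)) ^ 2 := by
        refine setLIntegral_mono' hSm fun ξ hξ => ?_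
        gcongr ENNReal.ofReal ?_ ^ 2
        exact Real.rpow_le_rpow_of_nonpos (by positivity) hξ.1 (by linarith)
    _ ≤ ENNReal.ofReal (((2:ℝ) ^ l) ^ (-s)) ^ 2 *
        volume (Metric.ball (0 : EuclideanSpace ℝ (Fin 2)) (2 ^ (l + 1))) := by
        rw [setLIntegral_const]
        gcongr
        intro ξ hξ
        simpa using hξ.2
    _ = _ := by
      rw [Measure.addHaar_ball_of_pos _ _ (by positivity), ← ENNReal.ofReal_pow (by positivity),
        ← ENNReal.ofReal_toReal hV, ← ENNReal.ofReal_mul (by positivity),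
        ← ENNReal.ofReal_mul (by positivity)]
      congr 1
      rw [finrank_euclideanSpace_fin, ENNReal.toReal_ofReal (by positivity)]
      have : ((2:ℝ) ^ (2 - 2 * s)) ^ l = (((2:ℝ) ^ l) ^ (-s)) ^ 2 * ((2:ℝ) ^ l) ^ 2 := by
        rw [← Real.rpow_natCast, ← Real.rpow_natCast, ← Real.rpow_natCast, ← Real.rpow_natCast,
          ← Real.rpow_mul (by norm_num), ← Real.rpow_mul (by norm_num), ← Real.rpow_mul (by norm_num),
          ← Real.rpow_mul (by norm_num), ← Real.rpow_add (by norm_num)]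
        congr 1
        push_cast
        ring
      rw [this, pow_succ]
      ring

lemma fs_mid (N : ℕ) :
    ∫⁻ ξ in {ξ : EuclideanSpace ℝ (Fin 2) | 1 ≤ ‖ξ‖ ∧ ‖ξ‖ < (2:ℝ) ^ N},
      ENNReal.ofReal (‖ξ‖ ^ (-1 : ℝ)) ^ 2
    ≤ ENNReal.ofReal (4 * (volume (Metric.ball (0 : EuclideanSpace ℝ (Fin 2)) 1)).toReal * N) := by
  have hsub : {ξ : EuclideanSpace ℝ (Fin 2) | 1 ≤ ‖ξ‖ ∧ ‖ξ‖ < (2:ℝ) ^ N} ⊆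
      ⋃ l : Fin N, {ξ | (2:ℝ) ^ (l : ℕ) ≤ ‖ξ‖ ∧ ‖ξ‖ < (2:ℝ) ^ ((l : ℕ) + 1)} := by
    rintro ξ ⟨h1, h2⟩
    obtain ⟨n, hn1, hn2⟩ := exists_nat_pow_near h1 (one_lt_two (α := ℝ))
    have : n < N := (pow_lt_pow_iff_right₀ (one_lt_two (α := ℝ))).1 (hn1.trans_lt h2)
    exact Set.mem_iUnion.2 ⟨⟨n, this⟩, hn1, hn2⟩
  refine (lintegral_mono_set hsub).trans ((lintegral_iUnion_le _ _).trans ?_)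
  rw [tsum_fintype]
  refine (Finset.sum_le_sum fun (l : Fin N) _ => fs_annulus 1 zero_le_one (l : ℕ)).trans ?_
  rw [← ENNReal.ofReal_sum_of_nonneg (fun _ _ => by positivity)]
  apply ENNReal.ofReal_le_ofReal
  norm_num
  linarith

lemma fs_high (r : ℝ) (hr : 2 < r) (N : ℕ) :
    ∫⁻ ξ in {ξ : EuclideanSpace ℝ (Fin 2) | (2:ℝ) ^ N ≤ ‖ξ‖},
      ENNReal.ofReal (‖ξ‖ ^ (-(r - 1) : ℝ)) ^ 2
    ≤ ENNReal.ofReal (4 * (volume (Metric.ball (0 : EuclideanSpace ℝ (Fin 2)) 1)).toReal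
        / (1 - (2:ℝ) ^ (4 - 2 * r)) * ((2:ℝ) ^ (4 - 2 * r)) ^ N) := by
  have hsub : {ξ : EuclideanSpace ℝ (Fin 2) | (2:ℝ) ^ N ≤ ‖ξ‖} ⊆
      ⋃ l : ℕ, {ξ | (2:ℝ) ^ (N + l) ≤ ‖ξ‖ ∧ ‖ξ‖ < (2:ℝ) ^ (N + l + 1)} := by
    intro ξ h1
    have h1' : (2:ℝ) ^ N ≤ ‖ξ‖ := h1
    obtain ⟨n, hn1, hn2⟩ := exists_nat_pow_near
      ((one_le_pow₀ (one_le_two (α := ℝ))).trans h1') (one_lt_two (α := ℝ))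
    have : N < n + 1 := (pow_lt_pow_iff_right₀ (one_lt_two (α := ℝ))).1 (h1'.trans_lt hn2)
    refine Set.mem_iUnion.2 ⟨n - N, ?_⟩
    rw [show N + (n - N) = n by omega]
    exact ⟨hn1, hn2⟩
  have hq1 : (2:ℝ) ^ (4 - 2 * r) < 1 := Real.rpow_lt_one_of_one_lt_of_neg one_lt_two (by linarith)
  have hq0 : 0 ≤ (2:ℝ) ^ (4 - 2 * r) := by positivity
  refine (lintegral_mono_set hsub).trans ((lintegral_iUnion_le _ _).trans ?_)
  refine (ENNReal.tsum_le_tsum fun l => fs_annulus (r - 1) (by linarith) (N + l)).trans ?_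
  rw [show 2 - 2 * (r - 1) = 4 - 2 * r by ring]
  have hs : HasSum (fun l : ℕ => 4 * (volume (Metric.ball (0 : EuclideanSpace ℝ (Fin 2)) 1)).toReal
      * ((2:ℝ) ^ (4 - 2 * r)) ^ (N + l))
      (4 * (volume (Metric.ball (0 : EuclideanSpace ℝ (Fin 2)) 1)).toReal
        / (1 - (2:ℝ) ^ (4 - 2 * r)) * ((2:ℝ) ^ (4 - 2 * r)) ^ N) := by
    have := (hasSum_geometric_of_lt_one hq0 hq1).mul_left
      (4 * (volume (Metric.ball (0 : EuclideanSpace ℝ (Fin 2)) 1)).toReal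
        * ((2:ℝ) ^ (4 - 2 * r)) ^ N)
    simp only [pow_add, ← mul_assoc, div_eq_mul_inv]
    rw [mul_right_comm _ (1 - (2:ℝ) ^ (4 - 2 * r))⁻¹]
    exact this
  rw [← ENNReal.ofReal_tsum_of_nonneg (fun _ => by positivity) hs.summable, hs.tsum_eq]

/-- **low–mid–high frequency splitting.** For `r₁ > 2` there is `C > 0`,
independent of `N`, `u` and `g`, such that for every non-decreasing `g ≥ 1`, every
Schwartz `u` and every integer `N ≥ 1`,
`‖∇u‖_{L^∞} ≤ C‖u‖_{L²} + C g²(2^N)√N ‖(Λ²/g²(Λ))u‖_{L²} + C 2^{N(2−r₁)}‖Λ^{r₁}u‖_{L²}`. -/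
theorem frequency_splitting
    (r₁ : ℝ) (hr₁ : 2 < r₁) :
    ∃ C : ℝ, 0 < C ∧
      ∀ g : ℝ → ℝ, (∀ τ, 0 ≤ τ → 1 ≤ g τ) → MonotoneOn g (Set.Ici (0:ℝ)) →
      ∀ u : SchwartzMap (EuclideanSpace ℝ (Fin 2)) ℂ,
      ∀ N : ℕ, 1 ≤ N →
        eLpNorm (fun x => fderiv ℝ (⇑u) x) ⊤ volume
          ≤ ENNReal.ofReal C * eLpNorm (⇑u) 2 volume
            + ENNReal.ofReal (C * (g ((2:ℝ) ^ N)) ^ 2 * Real.sqrt N) *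
                eLpNorm (gMultSq g u) 2 volume
            + ENNReal.ofReal (C * (2:ℝ) ^ ((N : ℝ) * (2 - r₁))) *
                eLpNorm (fLap r₁ u) 2 volume := by
  set V : ℝ := (volume (Metric.ball (0 : EuclideanSpace ℝ (Fin 2)) 1)).toReal with hVdef
  have hVt : volume (Metric.ball (0 : EuclideanSpace ℝ (Fin 2)) 1) ≠ ⊤ := measure_ball_lt_top.ne
  have hV : 0 < V := ENNReal.toReal_pos (Metric.measure_ball_pos _ _ one_pos).ne' hVt
  have hq1 : (2:ℝ) ^ (4 - 2 * r₁) < 1 :=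
    Real.rpow_lt_one_of_one_lt_of_neg one_lt_two (by linarith)
  have hq0 : 0 < (2:ℝ) ^ (4 - 2 * r₁) := by positivity
  set D : ℝ := 4 * V / (1 - (2:ℝ) ^ (4 - 2 * r₁)) with hD
  have hD4 : 4 * V ≤ D := by
    rw [hD, le_div_iff₀ (by linarith)]
    nlinarith
  have hD0 : 0 < D := by linarith
  refine ⟨2 * Real.pi * √D, by positivity, ?_⟩
  intro g hg1 hgm u N hN
  set G := g ((2:ℝ) ^ N) with hG
  have hG1 : 1 ≤ G := hg1 _ (by positivity)
  have hhat : Continuous (𝓕 (⇑u)) := by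
    rw [← SchwartzMap.fourier_coe]; exact (𝓕 u).continuous
  -- the three multipliers
  have P1 : eLpNorm (𝓕 (⇑u)) 2 volume = eLpNorm (⇑u) 2 volume := by
    have := fs_mult (fun _ => 1) measurable_const 0 (by simp) u
    simp only [Complex.ofReal_one, one_mul] at this
    have e : 𝓕⁻ (fun ξ => 𝓕 (⇑u) ξ) = ⇑u := by
      change 𝓕⁻ (𝓕 (⇑u)) = ⇑u
      rw [← SchwartzMap.fourier_coe, ← SchwartzMap.fourierInv_coe]
      simp
    rw [e] at this
    exact this.symm
  have hgmeas : Measurable (fun ξ : EuclideanSpace ℝ (Fin 2) => g ‖ξ‖) := by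
    have hmono : Monotone (fun t : ℝ => g (max t 0)) := fun a b hab =>
      hgm (Set.mem_Ici.2 (le_max_right _ _)) (Set.mem_Ici.2 (le_max_right _ _)) (max_le_max_right 0 hab)
    have := hmono.measurable.comp (measurable_norm (α := EuclideanSpace ℝ (Fin 2)))
    simpa [Function.comp_def] using this
  have hm2 : Measurable (fun ξ : EuclideanSpace ℝ (Fin 2) => ‖ξ‖ ^ (2:ℝ) / (g ‖ξ‖) ^ 2) :=
    (measurable_norm.pow_const _).div (hgmeas.pow_const _)
  have hm3 : Measurable (fun ξ : EuclideanSpace ℝ (Fin 2) => ‖ξ‖ ^ r₁) :=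
    measurable_norm.pow_const _
  have P2 := fs_mult (fun ξ => ‖ξ‖ ^ (2:ℝ) / (g ‖ξ‖) ^ 2) hm2 1 (by
    intro ξ
    have h1 := hg1 ‖ξ‖ (norm_nonneg _)
    rw [abs_of_nonneg (by positivity), Real.rpow_two]
    have : ‖ξ‖ ^ 2 / g ‖ξ‖ ^ 2 ≤ ‖ξ‖ ^ 2 :=
      div_le_self (by positivity) (one_le_pow₀ h1)
    linarith) u
  have P3 := fs_mult (fun ξ => ‖ξ‖ ^ r₁) hm3 ⌈r₁⌉₊ (by
    intro ξ
    rw [abs_of_nonneg (by positivity)]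
    have h1 : ‖ξ‖ ≤ 1 + ‖ξ‖ ^ 2 := by nlinarith [sq_nonneg (‖ξ‖ - 1)]
    calc ‖ξ‖ ^ r₁ ≤ (1 + ‖ξ‖ ^ 2) ^ r₁ := by gcongr
      _ ≤ (1 + ‖ξ‖ ^ 2) ^ ((⌈r₁⌉₊ : ℕ) : ℝ) :=
        Real.rpow_le_rpow_of_exponent_le (by nlinarith [sq_nonneg ‖ξ‖]) (Nat.le_ceil _)
      _ = _ := Real.rpow_natCast _ _) u
  set H2 : EuclideanSpace ℝ (Fin 2) → ℂ :=
    fun ξ => ((‖ξ‖ ^ (2:ℝ) / (g ‖ξ‖) ^ 2 : ℝ) : ℂ) * 𝓕 (⇑u) ξ with hH2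
  set H3 : EuclideanSpace ℝ (Fin 2) → ℂ := fun ξ => ((‖ξ‖ ^ r₁ : ℝ) : ℂ) * 𝓕 (⇑u) ξ with hH3
  have Q2 : eLpNorm (gMultSq g u) 2 volume = eLpNorm H2 2 volume := P2
  have Q3 : eLpNorm (fLap r₁ u) 2 volume = eLpNorm H3 2 volume := P3
  have hH2m : Measurable H2 := (Complex.measurable_ofReal.comp hm2).mul hhat.measurable
  have hH3m : Measurable H3 := (Complex.measurable_ofReal.comp hm3).mul hhat.measurable
  -- low frequencies
  have L1 : ∫⁻ ξ in Metric.ball (0 : EuclideanSpace ℝ (Fin 2)) 1, ‖ξ‖ₑ * ‖𝓕 (⇑u) ξ‖ₑ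
      ≤ ENNReal.ofReal (√D) * eLpNorm (𝓕 (⇑u)) 2 volume := by
    refine fs_cs _ measurableSet_ball _ (fun _ => 1) _ measurable_const
      hhat.measurable.aemeasurable (fun ξ hξ => ?_) _ (by positivity) ?_
    · gcongr
      rw [← ofReal_norm, ← ENNReal.ofReal_one]
      exact ENNReal.ofReal_le_ofReal (by simpa using (mem_ball_zero_iff.1 hξ).le)
    · rw [Real.sq_sqrt hD0.le]
      simp only [one_pow, setLIntegral_const, one_mul]
      rw [← ENNReal.ofReal_toReal hVt]
      exact ENNReal.ofReal_le_ofReal (by linarith)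
  -- middle frequencies
  have L2 : ∫⁻ ξ in {ξ : EuclideanSpace ℝ (Fin 2) | 1 ≤ ‖ξ‖ ∧ ‖ξ‖ < (2:ℝ) ^ N},
      ‖ξ‖ₑ * ‖𝓕 (⇑u) ξ‖ₑ ≤ ENNReal.ofReal (√D * G ^ 2 * √N) * eLpNorm H2 2 volume := by
    refine fs_cs _ ((measurableSet_le measurable_const measurable_norm).inter
      (measurableSet_lt measurable_norm measurable_const)) _
      (fun ξ => ENNReal.ofReal (G ^ 2) * ENNReal.ofReal (‖ξ‖ ^ (-1 : ℝ))) _ (by fun_prop)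
      hH2m.aemeasurable (fun ξ hξ => ?_) _ (by positivity) ?_
    · have h1 : 1 ≤ ‖ξ‖ := hξ.1
      have h2 : ‖ξ‖ < (2:ℝ) ^ N := hξ.2
      have h0 : 0 < ‖ξ‖ := by linarith
      have hg := hg1 ‖ξ‖ h0.le
      have hgG : g ‖ξ‖ ≤ G := hgm h0.le (by simp) h2.le
      rw [hH2, ← ofReal_norm, ← ofReal_norm, ← ofReal_norm,
        ← ENNReal.ofReal_mul (by positivity), ← ENNReal.ofReal_mul (by positivity),
        ← ENNReal.ofReal_mul (by positivity)]
      apply ENNReal.ofReal_le_ofReal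
      rw [norm_mul, Complex.norm_real, Real.norm_of_nonneg (by positivity), ← mul_assoc]
      gcongr
      rw [Real.rpow_neg_one, Real.rpow_two]
      have : G ^ 2 * ‖ξ‖⁻¹ * (‖ξ‖ ^ 2 / g ‖ξ‖ ^ 2) = ‖ξ‖ * (G ^ 2 / g ‖ξ‖ ^ 2) := by
        field_simp
      rw [this]
      refine le_mul_of_one_le_right h0.le ?_
      rw [one_le_div (by positivity)]
      gcongr
    · simp only [mul_pow]
      rw [lintegral_const_mul _ (by fun_prop)]
      refine (mul_le_mul_right (fs_mid N) _).trans ?_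
      rw [← ENNReal.ofReal_pow (by positivity), ← ENNReal.ofReal_mul (by positivity)]
      apply ENNReal.ofReal_le_ofReal
      rw [Real.sq_sqrt hD0.le, Real.sq_sqrt (by positivity)]
      have : (G ^ 2) ^ 2 * (4 * V * N) ≤ (G ^ 2) ^ 2 * (D * N) := by gcongr
      linarith
  -- high frequencies
  have L3 : ∫⁻ ξ in {ξ : EuclideanSpace ℝ (Fin 2) | (2:ℝ) ^ N ≤ ‖ξ‖},
      ‖ξ‖ₑ * ‖𝓕 (⇑u) ξ‖ₑ
      ≤ ENNReal.ofReal (√D * (2:ℝ) ^ ((N : ℝ) * (2 - r₁))) * eLpNorm H3 2 volume := by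
    refine fs_cs _ (measurableSet_le measurable_const measurable_norm) _
      (fun ξ => ENNReal.ofReal (‖ξ‖ ^ (-(r₁ - 1) : ℝ))) _ (by fun_prop)
      hH3m.aemeasurable (fun ξ hξ => ?_) _ (by positivity) ?_
    · have h0 : 0 < ‖ξ‖ := lt_of_lt_of_le (by positivity) hξ
      rw [hH3, ← ofReal_norm, ← ofReal_norm, ← ofReal_norm,
        ← ENNReal.ofReal_mul (by positivity), ← ENNReal.ofReal_mul (by positivity)]
      apply ENNReal.ofReal_le_ofReal
      rw [norm_mul, Complex.norm_real, Real.norm_of_nonneg (by positivity), ← mul_assoc,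
        ← Real.rpow_add h0]
      simp
    · refine (fs_high r₁ hr₁ N).trans (le_of_eq ?_)
      rw [mul_pow, Real.sq_sqrt hD0.le]
      congr 2
      rw [← Real.rpow_natCast, ← Real.rpow_natCast, ← Real.rpow_mul (by norm_num),
        ← Real.rpow_mul (by norm_num)]
      congr 1
      push_cast
      ring
  have hcover : (Set.univ : Set (EuclideanSpace ℝ (Fin 2))) ⊆
      Metric.ball 0 1 ∪ ({ξ | 1 ≤ ‖ξ‖ ∧ ‖ξ‖ < (2:ℝ) ^ N} ∪ {ξ | (2:ℝ) ^ N ≤ ‖ξ‖}) := by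
    intro ξ _
    by_cases h1 : ‖ξ‖ < 1
    · left; simpa using h1
    · right
      by_cases h2 : ‖ξ‖ < (2:ℝ) ^ N
      · exact Or.inl ⟨not_lt.1 h1, h2⟩
      · exact Or.inr (not_lt.1 h2)
  have total : ∫⁻ ξ, ‖ξ‖ₑ * ‖𝓕 (⇑u) ξ‖ₑ ≤
      ENNReal.ofReal (√D) * eLpNorm (⇑u) 2 volume
      + (ENNReal.ofReal (√D * G ^ 2 * √N) * eLpNorm H2 2 volume
      + ENNReal.ofReal (√D * (2:ℝ) ^ ((N : ℝ) * (2 - r₁))) * eLpNorm H3 2 volume) := by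
    rw [← setLIntegral_univ, ← P1]
    refine (lintegral_mono_set hcover).trans ((lintegral_union_le _ _ _).trans ?_)
    exact add_le_add L1 ((lintegral_union_le _ _ _).trans (add_le_add L2 L3))
  rw [eLpNorm_exponent_top]
  refine eLpNormEssSup_le_of_ae_enorm_bound (Filter.Eventually.of_forall fun x => ?_)
  refine (fs_grad u x).trans ((mul_le_mul_right total _).trans (le_of_eq ?_))
  rw [Q2, Q3, mul_add, mul_add, ← mul_assoc, ← mul_assoc, ← mul_assoc,
    ← ENNReal.ofReal_mul (by positivity), ← ENNReal.ofReal_mul (by positivity),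
    ← ENNReal.ofReal_mul (by positivity)]
  simp only [mul_assoc, add_assoc]
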